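/- arXiv:solv-int/9907001 — 2 statements merged into one kernel-verified Lean document; each statement's English description precedes it below -/
import Mathlib

section
/- Let a, b > 0 be real. Define q̃_{2m+1}(x) = p_{2m+1}(x) and q̃_{2m}(x) = 2^{6m} m! [Γ(a/2+b/2+m+1)Γ(a/2+m+1)Γ(b/2+m+1) / Γ(a+b+4m+2)] · Σ_{j=0}^{m} [Γ(a+b+4j+2) / (j!·2^{6j}·Γ(a/2+b/2+j+1)Γ(a/2+j+1)Γ(b/2+j+1))]·p_{2j}(x), where p_k are the monic Jacobi polynomials with parameters a, b. Then the family {q̃_j} is skew orthogonal with respect to the β = 4 skew inner product with weight (1−x)^{a+1}(1+x)^{b+1} on (−1, 1): for all natural numbers m, n one has ⟨q̃_{2m}, q̃_{2n}⟩₄ = 0, ⟨q̃_{2m+1}, q̃_{2n+1}⟩₄ = 0, and ⟨q̃_{2m}, q̃_{2n+1}⟩₄ = 0 if m ≠ n, while ⟨q̃_{2m}, q̃_{2m+1}⟩₄ = 2^{a+b+4m+2} Γ(2m+2)Γ(a+2m+2)Γ(b+2m+2)Γ(a+b+2m+2) / (Γ(a+b+4m+2)Γ(a+b+4m+4)). 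-/
open MeasureTheory Finset

/-- The Jacobi polynomial `P_n^{(a,b)}`. -/
noncomputable def jacobiP (a b : ℝ) (n : ℕ) (x : ℝ) : ℝ :=
  ∑ s ∈ range (n + 1),
    (Real.Gamma ((n : ℝ) + a + 1) / (Real.Gamma (a + (s : ℝ) + 1) * (Nat.factorial (n - s)))) *
    (Real.Gamma ((n : ℝ) + b + 1) / (Real.Gamma ((n : ℝ) + b - (s : ℝ) + 1) * (Nat.factorial s))) *
    ((x - 1) / 2) ^ s * ((x + 1) / 2) ^ (n - s)

/-- The monic Jacobi polynomials `p_k = 2^k k! Γ(a+b+k+1)/Γ(a+b+2k+1) · P_k^{(a,b)}`. -/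
noncomputable def jacobiMonic (a b : ℝ) (k : ℕ) (x : ℝ) : ℝ :=
  2 ^ k * (Nat.factorial k) * Real.Gamma (a + b + (k : ℝ) + 1) /
    Real.Gamma (a + b + 2 * (k : ℝ) + 1) * jacobiP a b k x

/-- The skew orthogonal candidates: `q̃_{2m+1} = p_{2m+1}`, and `q̃_{2m}` the explicit
combination of the even monic Jacobi polynomials. -/
noncomputable def qJSE (a b : ℝ) (j : ℕ) (x : ℝ) : ℝ :=
  if j % 2 = 1 then jacobiMonic a b j x
  else 2 ^ (3 * j) * (Nat.factorial (j / 2)) *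
    (Real.Gamma (a / 2 + b / 2 + (j / 2 : ℕ) + 1) * Real.Gamma (a / 2 + (j / 2 : ℕ) + 1) *
      Real.Gamma (b / 2 + (j / 2 : ℕ) + 1) / Real.Gamma (a + b + 2 * (j : ℝ) + 2)) *
    ∑ i ∈ range (j / 2 + 1),
      (Real.Gamma (a + b + 4 * (i : ℝ) + 2) /
        ((Nat.factorial i) * 2 ^ (6 * i) * Real.Gamma (a / 2 + b / 2 + (i : ℝ) + 1) *
          Real.Gamma (a / 2 + (i : ℝ) + 1) * Real.Gamma (b / 2 + (i : ℝ) + 1)))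
        * jacobiMonic a b (2 * i) x

/-- The β = 4 skew inner product with weight `(1−x)^{a+1} (1+x)^{b+1}` on `(−1, 1)`. -/
noncomputable def sip4J (a b : ℝ) (f g : ℝ → ℝ) : ℝ :=
  (1 / 2) * ∫ x in Set.Ioo (-1 : ℝ) 1,
    (1 - x) ^ (a + 1) * (1 + x) ^ (b + 1) * (f x * deriv g x - deriv f x * g x)


open Polynomial

/-- Coefficients of the Jacobi polynomial in the homogeneous basis. -/
noncomputable def jacC (a b : ℝ) (n s : ℕ) : ℝ :=
    (Real.Gamma ((n : ℝ) + a + 1) / (Real.Gamma (a + (s : ℝ) + 1) * (Nat.factorial (n - s)))) *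
    (Real.Gamma ((n : ℝ) + b + 1) / (Real.Gamma ((n : ℝ) + b - (s : ℝ) + 1) * (Nat.factorial s)))

noncomputable def jacU : ℝ[X] := C (1/2) * (X - 1)
noncomputable def jacV : ℝ[X] := C (1/2) * (X + 1)

noncomputable def jacPoly (a b : ℝ) (n : ℕ) : ℝ[X] :=
  ∑ s ∈ range (n + 1), C (jacC a b n s) * (jacU ^ s * jacV ^ (n - s))

lemma jacPoly_eval (a b : ℝ) (n : ℕ) (x : ℝ) : (jacPoly a b n).eval x = jacobiP a b n x := by
  simp only [jacPoly, jacobiP, jacC, jacU, jacV, eval_finsetSum, eval_mul, eval_C, eval_pow,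
    eval_sub, eval_add, eval_X, eval_one]
  refine Finset.sum_congr rfl fun s _ => ?_
  rw [show (1/2 : ℝ) * (x - 1) = (x-1)/2 by ring, show (1/2 : ℝ) * (x + 1) = (x+1)/2 by ring]
  ring

lemma jacC_rel1 (a b : ℝ) (ha : 0 < a) (hb : 0 < b) (n s : ℕ) (h : s ≤ n) :
    ((s : ℝ) + a + 1) * jacC (a+1) (b+1) n s = ((n + 1 - s : ℕ) : ℝ) * jacC a b (n+1) s := by
  obtain ⟨k, rfl⟩ := Nat.exists_eq_add_of_le h
  unfold jacC
  rw [show s + k + 1 - s = k + 1 by omega, show s + k - s = k by omega, Nat.factorial_succ]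
  have e1 : Real.Gamma (a + 1 + (s:ℝ) + 1) = (a + s + 1) * Real.Gamma (a + s + 1) := by
    rw [← Real.Gamma_add_one (by positivity)]; ring_nf
  push_cast
  rw [e1, show (s:ℝ) + k + (a+1) + 1 = s + k + 1 + a + 1 by ring,
    show (s:ℝ) + k + (b+1) + 1 = s + k + 1 + b + 1 by ring,
    show (s:ℝ) + k + (b+1) - s + 1 = k + b + 2 by ring,
    show (s:ℝ) + k + 1 + b - s + 1 = k + b + 2 by ring]
  have g1 : Real.Gamma (a + s + 1) ≠ 0 := (Real.Gamma_pos_of_pos (by positivity)).ne'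
  have g2 : Real.Gamma (k + b + 2) ≠ 0 := (Real.Gamma_pos_of_pos (by positivity)).ne'
  have : a + (s:ℝ) + 1 ≠ 0 := by positivity
  field_simp
  ring

lemma jacC_rel2 (a b : ℝ) (ha : 0 < a) (hb : 0 < b) (n s : ℕ) (h : s ≤ n) :
    ((n + 1 - s : ℕ) + b) * jacC (a+1) (b+1) n s = ((s : ℝ) + 1) * jacC a b (n+1) (s+1) := by
  obtain ⟨k, rfl⟩ := Nat.exists_eq_add_of_le h
  unfold jacC
  rw [show s + k + 1 - s = k + 1 by omega, show s + k - s = k by omega, 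
    show s + k + 1 - (s + 1) = k by omega, Nat.factorial_succ]
  have e1 : Real.Gamma ((k:ℝ) + b + 2) = (k + b + 1) * Real.Gamma (k + b + 1) := by
    rw [← Real.Gamma_add_one (by positivity)]; ring_nf
  push_cast
  rw [show (s:ℝ) + k + (a+1) + 1 = s + k + 1 + a + 1 by ring,
    show (s:ℝ) + k + (b+1) + 1 = s + k + 1 + b + 1 by ring,
    show (s:ℝ) + k + (b+1) - s + 1 = k + b + 2 by ring,
    show (s:ℝ) + k + 1 + b - (s + 1) + 1 = k + b + 1 by ring,
    show a + ((s:ℝ) + 1) + 1 = a + 1 + s + 1 by ring, e1]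
  have g1 : Real.Gamma (a + 1 + s + 1) ≠ 0 := (Real.Gamma_pos_of_pos (by positivity)).ne'
  have g2 : Real.Gamma (k + b + 1) ≠ 0 := (Real.Gamma_pos_of_pos (by positivity)).ne'
  have : (k:ℝ) + b + 1 ≠ 0 := by positivity
  field_simp
  ring

lemma jacU_der : derivative jacU = C (1/2) := by simp [jacU]
lemma jacV_der : derivative jacV = C (1/2) := by simp [jacV]

/-- Derivative of a homogeneous sum. -/
lemma hom_der (c : ℕ → ℝ) (n : ℕ) :
    derivative (∑ s ∈ range (n + 2), C (c s) * (jacU ^ s * jacV ^ (n + 1 - s))) =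
    C (1/2) * ∑ s ∈ range (n + 1), C (((s : ℝ) + 1) * c (s+1) + ((n + 1 - s : ℕ) : ℝ) * c s) *
      (jacU ^ s * jacV ^ (n - s)) := by
  have h1 : ∀ s ∈ range (n+2), derivative (C (c s) * (jacU ^ s * jacV ^ (n + 1 - s))) =
      C (1/2) * (C (c s * s) * (jacU ^ (s-1) * jacV ^ (n+1-s))) +
      C (1/2) * (C (c s * ((n + 1 - s : ℕ) : ℝ)) * (jacU ^ s * jacV ^ (n - s))) := by
    intro s _
    rw [derivative_C_mul, derivative_mul, derivative_pow, derivative_pow, jacU_der, jacV_der,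
      show n + 1 - s - 1 = n - s by omega]
    simp only [C_mul]
    ring
  rw [derivative_sum, Finset.sum_congr rfl h1, Finset.sum_add_distrib, ← Finset.mul_sum,
    ← Finset.mul_sum, Finset.sum_range_succ', Finset.sum_range_succ _ (n+1)]
  simp only [Nat.cast_zero, mul_zero, C_0, zero_mul, add_zero, Nat.sub_self]
  rw [← mul_add, ← Finset.sum_add_distrib]
  congr 1
  refine Finset.sum_congr rfl fun s _ => ?_
  rw [show s + 1 - 1 = s by omega, show n + 1 - (s+1) = n - s by omega]
  simp only [C_mul, C_add]
  push_cast
  simp only [C_add]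
  ring

lemma jacPoly_der (a b : ℝ) (ha : 0 < a) (hb : 0 < b) (n : ℕ) :
    derivative (jacPoly a b (n+1)) = C ((n + a + b + 2) / 2) * jacPoly (a+1) (b+1) n := by
  unfold jacPoly
  rw [hom_der, Finset.mul_sum, Finset.mul_sum]
  refine Finset.sum_congr rfl fun s hs => ?_
  have hs' : s ≤ n := by simpa [Nat.lt_succ_iff] using hs
  rw [← jacC_rel1 a b ha hb n s hs', ← jacC_rel2 a b ha hb n s hs', ← mul_assoc (C _) (C _),
    ← mul_assoc (C _) (C _), ← C_mul, ← C_mul]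
  congr 2
  rw [Nat.cast_sub (by omega)]; push_cast; ring

/-- The polynomial `W'/w`. -/
noncomputable def jacE (a b : ℝ) : ℝ[X] := C (b+1) * (1 - X) - C (a+1) * (1 + X)

lemma jacUV : jacV - jacU = 1 := by
  have : (C (1/2) : ℝ[X]) * 2 = 1 := by rw [← C_ofNat, ← C_mul]; norm_num
  simp only [jacU, jacV]; linear_combination this
lemma jacX1 : (1 - X : ℝ[X]) = - 2 * jacU := by
  have : (C (1/2) : ℝ[X]) * 2 = 1 := by rw [← C_ofNat, ← C_mul]; norm_num
  simp only [jacU]; linear_combination (1 - X) * (-this)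
lemma jacX2 : (1 + X : ℝ[X]) = 2 * jacV := by
  have : (C (1/2) : ℝ[X]) * 2 = 1 := by rw [← C_ofNat, ← C_mul]; norm_num
  simp only [jacV]; linear_combination (1 + X) * (-this)

lemma jacPoly_raise (a b : ℝ) (ha : 0 < a) (hb : 0 < b) (n : ℕ) :
    (1 - X^2) * derivative (jacPoly (a+1) (b+1) n) + jacE a b * jacPoly (a+1) (b+1) n
      = C (-2 * ((n:ℝ) + 1)) * jacPoly a b (n+1) := by
  have hC : (C (1/2) : ℝ[X]) * 2 = 1 := by rw [← C_ofNat, ← C_mul]; norm_num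
  have hX : (1 - X^2 : ℝ[X]) = -4 * (jacU * jacV) := by
    have : (1 - X^2 : ℝ[X]) = (1 - X) * (1 + X) := by ring
    rw [this, jacX1, jacX2]; ring
  have hE : jacE a b = -2 * (C (b+1) * jacU + C (a+1) * jacV) := by
    unfold jacE; rw [jacX1, jacX2]; ring
  have key : (1 - X^2) * derivative (jacPoly (a+1) (b+1) n) + jacE a b * jacPoly (a+1) (b+1) n
      = -2 * ∑ s ∈ range (n+1), (C (((n + 1 - s : ℕ) : ℝ) * jacC a b (n+1) s) *
          (jacU ^ s * jacV ^ (n + 1 - s)) + C (((s : ℝ) + 1) * jacC a b (n+1) (s+1)) *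
          (jacU ^ (s+1) * jacV ^ (n + 1 - (s + 1)))) := by
    rw [hX, hE]
    unfold jacPoly
    rw [derivative_sum, Finset.mul_sum, Finset.mul_sum, Finset.mul_sum, ← Finset.sum_add_distrib]
    refine Finset.sum_congr rfl fun s hs => ?_
    have hs' : s ≤ n := by simpa [Nat.lt_succ_iff] using hs
    rw [← jacC_rel1 a b ha hb n s hs', ← jacC_rel2 a b ha hb n s hs']
    obtain ⟨k, rfl⟩ := Nat.exists_eq_add_of_le hs'
    rw [show s + k + 1 - s = k + 1 by omega, show s + k - s = k by omega, 
      show s + k + 1 - (s + 1) = k by omega]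
    rw [derivative_C_mul, derivative_mul, derivative_pow, derivative_pow, jacU_der, jacV_der]
    have p1 : (C (s:ℝ) : ℝ[X]) * jacU ^ (s-1) * jacU = C (s:ℝ) * jacU ^ s := by
      cases s with
      | zero => simp
      | succ s => simp [pow_succ, mul_assoc]
    have p2 : (C (k:ℝ) : ℝ[X]) * jacV ^ (k-1) * jacV = C (k:ℝ) * jacV ^ k := by
      cases k with
      | zero => simp
      | succ s => simp [pow_succ, mul_assoc]
    push_cast
    simp only [C_mul, C_add, C_1]
    linear_combination (-2) * (C (jacC (a+1) (b+1) (s+k) s)) * ((jacV ^ (k+1)) * p1 +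
       jacU ^ (s+1) * p2) + (-2) * (C (jacC (a+1) (b+1) (s+k) s)) * ((jacV ^ (k+1)) * 
       ((C (s:ℝ) : ℝ[X]) * jacU ^ (s-1) * jacU) +
       jacU ^ (s+1) * ((C (k:ℝ) : ℝ[X]) * jacV ^ (k-1) * jacV)) * hC
  rw [key, Finset.sum_add_distrib]
  have e1 : ∑ s ∈ range (n+1), C (((n + 1 - s : ℕ) : ℝ) * jacC a b (n+1) s) *
          (jacU ^ s * jacV ^ (n + 1 - s)) = ∑ s ∈ range (n+2), C (((n + 1 - s : ℕ) : ℝ) * jacC a b (n+1) s) *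
          (jacU ^ s * jacV ^ (n + 1 - s)) := by
    rw [Finset.sum_range_succ _ (n+1)]; simp
  have e2 : ∑ s ∈ range (n+1), C (((s : ℝ) + 1) * jacC a b (n+1) (s+1)) *
          (jacU ^ (s+1) * jacV ^ (n + 1 - (s + 1))) = ∑ s ∈ range (n+2), C ((s : ℝ) * jacC a b (n+1) s) *
          (jacU ^ s * jacV ^ (n + 1 - s)) := by
    rw [Finset.sum_range_succ' _ (n+1)]; simp
  rw [e1, e2, ← Finset.sum_add_distrib]
  unfold jacPoly
  rw [Finset.mul_sum, Finset.mul_sum]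
  refine Finset.sum_congr rfl fun s hs => ?_
  have hs' : s ≤ n + 1 := by simpa [Nat.lt_succ_iff] using hs
  rw [Nat.cast_sub hs']
  push_cast
  simp only [C_mul, C_add, C_sub, C_1, C_neg, C_ofNat]
  ring

lemma hom_natDegree (s k : ℕ) : (jacU ^ s * jacV ^ k).natDegree ≤ s + k := by
  unfold jacU jacV
  compute_degree
  

lemma jacPoly_natDegree (a b : ℝ) (n : ℕ) : (jacPoly a b n).natDegree ≤ n := by
  unfold jacPoly
  refine natDegree_sum_le_of_forall_le _ _ fun s hs => ?_
  have hs' : s ≤ n := by simpa [Nat.lt_succ_iff] using hs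
  refine (natDegree_C_mul_le _ _).trans ((hom_natDegree _ _).trans (by omega))

lemma jacPoly_coeff (n : ℕ) : ∀ (a b : ℝ) (_ : 0 < a) (_ : 0 < b), (jacPoly a b n).coeff n =
    Real.Gamma (a + b + 2 * n + 1) / (2 ^ n * n.factorial * Real.Gamma (a + b + n + 1)) := by
  induction n with
  | zero =>
    intro a b ha hb
    have g1 : Real.Gamma (a + b + 1) ≠ 0 := (Real.Gamma_pos_of_pos (by positivity)).ne'
    have g2 : Real.Gamma (a + 1) ≠ 0 := (Real.Gamma_pos_of_pos (by positivity)).ne'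
    have g3 : Real.Gamma (b + 1) ≠ 0 := (Real.Gamma_pos_of_pos (by positivity)).ne'
    simp [jacPoly, jacC, g1, g2, g3]
  | succ n ih =>
    intro a b ha hb
    have h := congrArg (fun p => p.coeff n) (jacPoly_der a b ha hb n)
    simp only [coeff_derivative, coeff_C_mul] at h
    rw [ih (a+1) (b+1) (by positivity) (by positivity)] at h
    have e1 : Real.Gamma (a + 1 + (b + 1) + n + 1) = (a + b + n + 2) * Real.Gamma (a + b + n + 2) := by
      rw [← Real.Gamma_add_one (by positivity)]; ring_nf
    have g1 : Real.Gamma (a + b + n + 2) ≠ 0 := (Real.Gamma_pos_of_pos (by positivity)).ne'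
    rw [e1] at h
    have hn : (n:ℝ) + 1 ≠ 0 := by positivity
    rw [← eq_div_iff hn] at h
    rw [h, Nat.factorial_succ]
    push_cast
    rw [show a + b + 2 * ((n:ℝ)+1) + 1 = a + 1 + (b+1) + 2 * n + 1 by ring,
      show a + b + ((n:ℝ)+1) + 1 = a + b + n + 2 by ring]
    have : a + b + n + 2 ≠ 0 := by positivity
    field_simp
    ring

lemma jac_cont (a b : ℝ) (ha : 0 < a) (hb : 0 < b) (Q : ℝ[X]) :
    Continuous fun x : ℝ => (1 - x) ^ a * (1 + x) ^ b * Q.eval x := by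
  refine ((Continuous.rpow_const (by fun_prop) fun _ => Or.inr ha.le).mul
    (Continuous.rpow_const (by fun_prop) fun _ => Or.inr hb.le)).mul Q.continuous

/-- The Jacobi moment functional. -/
noncomputable def jacL (a b : ℝ) (Q : ℝ[X]) : ℝ :=
  ∫ x in (-1 : ℝ)..1, (1 - x) ^ a * (1 + x) ^ b * Q.eval x

lemma jacL_add (a b : ℝ) (ha : 0 < a) (hb : 0 < b) (P Q : ℝ[X]) :
    jacL a b (P + Q) = jacL a b P + jacL a b Q := by
  unfold jacL
  rw [← intervalIntegral.integral_add ((jac_cont a b ha hb P).intervalIntegrable _ _)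
    ((jac_cont a b ha hb Q).intervalIntegrable _ _)]
  simp only [eval_add, mul_add]

lemma jacL_C_mul (a b : ℝ) (c : ℝ) (P : ℝ[X]) :
    jacL a b (C c * P) = c * jacL a b P := by
  unfold jacL
  rw [← intervalIntegral.integral_const_mul]
  congr 1
  ext x
  simp only [eval_mul, eval_C]
  ring

lemma jacL_zero (a b : ℝ) : jacL a b 0 = 0 := by simp [jacL]

lemma jacL_sub (a b : ℝ) (ha : 0 < a) (hb : 0 < b) (P Q : ℝ[X]) :
    jacL a b (P - Q) = jacL a b P - jacL a b Q := by
  have h : P - Q = P + C (-1) * Q := by simp [sub_eq_add_neg]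
  rw [h, jacL_add a b ha hb, jacL_C_mul]; ring

lemma jacL_shift (a b : ℝ) (ha : 0 < a) (hb : 0 < b) (Q : ℝ[X]) :
    jacL (a+1) (b+1) Q = jacL a b ((1 - X^2) * Q) := by
  unfold jacL
  refine intervalIntegral.integral_congr fun x hx => ?_
  rw [Set.uIcc_of_le (by norm_num)] at hx
  have h1 : 0 ≤ 1 - x := by linarith [hx.2]
  have h2 : 0 ≤ 1 + x := by linarith [hx.1]
  simp only [Real.rpow_add_one' h1 (by positivity : a + 1 ≠ 0),
    Real.rpow_add_one' h2 (by positivity : b + 1 ≠ 0), eval_mul, eval_sub, eval_one, eval_pow, eval_X]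
  ring

lemma jacL_ibp (a b : ℝ) (ha : 0 < a) (hb : 0 < b) (R : ℝ[X]) :
    jacL a b ((1 - X^2) * derivative R + jacE a b * R) = 0 := by
  unfold jacL
  have key := intervalIntegral.integral_eq_sub_of_hasDerivAt (a := (-1:ℝ)) (b := 1)
    (f := fun x : ℝ => (1 - x) ^ (a+1) * (1 + x) ^ (b+1) * R.eval x)
    (f' := fun x : ℝ => (1 - x) ^ a * (1 + x) ^ b *
      ((1 - X^2) * derivative R + jacE a b * R).eval x) ?_
      ((jac_cont a b ha hb _).intervalIntegrable _ _)
  · rw [key]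
    have h1 : a + 1 ≠ 0 := by positivity
    have h2 : b + 1 ≠ 0 := by positivity
    simp [Real.zero_rpow h1, Real.zero_rpow h2]
  · intro x hx
    rw [Set.uIcc_of_le (by norm_num)] at hx
    have h1 : 0 ≤ 1 - x := by linarith [hx.2]
    have h2 : 0 ≤ 1 + x := by linarith [hx.1]
    have d1 : HasDerivAt (fun x : ℝ => (1 - x) ^ (a+1)) ((-1) * (a+1) * (1 - x) ^ (a + 1 - 1)) x :=
      ((hasDerivAt_id x).const_sub 1).rpow_const (Or.inr (by linarith))
    have d2 : HasDerivAt (fun x : ℝ => (1 + x) ^ (b+1)) (1 * (b+1) * (1 + x) ^ (b + 1 - 1)) x :=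
      ((hasDerivAt_id x).const_add 1).rpow_const (Or.inr (by linarith))
    refine ((d1.mul d2).mul (R.hasDerivAt x)).congr_deriv ?_
    rw [add_sub_cancel_right, add_sub_cancel_right]
    simp only [Real.rpow_add_one' h1 (by positivity : a + 1 ≠ 0), jacE, Pi.mul_apply,
      Real.rpow_add_one' h2 (by positivity : b + 1 ≠ 0), eval_mul, eval_sub, eval_one, eval_pow,
      eval_X, eval_add, eval_C]
    ring

lemma jacL_one (A B : ℝ) (hA : 0 < A) (hB : 0 < B) :
    jacL A B 1 = 2 ^ (A + B + 1) * Real.Gamma (A + 1) * Real.Gamma (B + 1) /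
      Real.Gamma (A + B + 2) := by
  have h0 : jacL A B 1 = ∫ x in (0:ℝ)..2, x ^ B * (2 - x) ^ A := by
    have := intervalIntegral.integral_comp_add_right (a := (-1:ℝ)) (b := 1)
      (fun x : ℝ => x ^ B * (2 - x) ^ A) 1
    norm_num at this
    rw [← this]
    unfold jacL
    congr 1
    ext x
    rw [show 2 - (x + 1) = 1 - x by ring, add_comm x 1]
    simp [mul_comm]
  have h1 := Complex.betaIntegral_scaled ((B + 1 : ℝ) : ℂ) ((A + 1 : ℝ) : ℂ) (a := 2) (by norm_num)
  rw [Complex.betaIntegral_eq_Gamma_mul_div _ _ (by simpa using by positivity)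
    (by simpa using by positivity), ← Complex.ofReal_add, Complex.Gamma_ofReal,
    Complex.Gamma_ofReal, Complex.Gamma_ofReal] at h1
  have h2 : ∫ x in (0:ℝ)..2, (x : ℂ) ^ (((B + 1 : ℝ) : ℂ) - 1) *
      (((2 : ℝ) : ℂ) - x) ^ (((A + 1 : ℝ) : ℂ) - 1)
      = ((∫ x in (0:ℝ)..2, x ^ B * (2 - x) ^ A : ℝ) : ℂ) := by
    rw [← intervalIntegral.integral_ofReal]
    refine intervalIntegral.integral_congr fun x hx => ?_
    rw [Set.uIcc_of_le (by norm_num)] at hx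
    have e1 : ((B + 1 : ℝ) : ℂ) - 1 = (B : ℂ) := by push_cast; ring
    have e2 : ((A + 1 : ℝ) : ℂ) - 1 = (A : ℂ) := by push_cast; ring
    simp only [e1, e2]
    rw [Complex.ofReal_mul, Complex.ofReal_cpow hx.1, Complex.ofReal_cpow (by linarith [hx.2])]
    push_cast; rfl
  rw [h2] at h1
  have e3 : (((2:ℝ) : ℂ) ^ (((B + 1 + (A + 1) : ℝ) : ℂ) - 1)) = ((2 ^ (A + B + 1) : ℝ) : ℂ) := by
    rw [Complex.ofReal_cpow (by norm_num)]
    congr 1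
    push_cast; ring
  rw [e3] at h1
  rw [h0]
  have h3 : (∫ x in (0:ℝ)..2, x ^ B * (2 - x) ^ A) = 2 ^ (A + B + 1) *
      (Real.Gamma (B + 1) * Real.Gamma (A + 1) / Real.Gamma (B + 1 + (A + 1))) := by
    exact_mod_cast h1
  rw [h3, show B + 1 + (A + 1) = A + B + 2 by ring]
  ring

lemma jacL_orth (n : ℕ) : ∀ (a b : ℝ) (_ : 0 < a) (_ : 0 < b) (Q : ℝ[X]), Q.natDegree ≤ n →
    jacL a b (jacPoly a b n * Q) = Q.coeff n * (1/2) ^ n * jacL (a + n) (b + n) 1 := by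
  induction n with
  | zero =>
    intro a b ha hb Q hQ
    have g2 : Real.Gamma (a + 1) ≠ 0 := (Real.Gamma_pos_of_pos (by positivity)).ne'
    have g3 : Real.Gamma (b + 1) ≠ 0 := (Real.Gamma_pos_of_pos (by positivity)).ne'
    have hJ : jacPoly a b 0 = 1 := by simp [jacPoly, jacC, g2, g3]
    rw [hJ, one_mul]
    conv_lhs => rw [eq_C_of_natDegree_le_zero hQ, ← mul_one (C _), jacL_C_mul]
    simp
  | succ n ih =>
    intro a b ha hb Q hQ
    have h := jacL_ibp a b ha hb (jacPoly (a+1) (b+1) n * Q)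
    have e : (1 - X^2) * derivative (jacPoly (a+1) (b+1) n * Q) +
        jacE a b * (jacPoly (a+1) (b+1) n * Q) =
        C (-2 * ((n:ℝ) + 1)) * (jacPoly a b (n+1) * Q) +
        (1 - X^2) * (jacPoly (a+1) (b+1) n * derivative Q) := by
      rw [derivative_mul]
      linear_combination Q * jacPoly_raise a b ha hb n
    rw [e, jacL_add a b ha hb, jacL_C_mul, ← jacL_shift a b ha hb,
      ih (a+1) (b+1) (by positivity) (by positivity) _
        ((natDegree_derivative_le Q).trans (by omega)), coeff_derivative,
      show a + 1 + (n:ℝ) = a + ((n+1 : ℕ) : ℝ) by push_cast; ring,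
      show b + 1 + (n:ℝ) = b + ((n+1 : ℕ) : ℝ) by push_cast; ring] at h
    have hn : (n:ℝ) + 1 ≠ 0 := by positivity
    apply mul_left_cancel₀ (mul_ne_zero two_ne_zero hn)
    rw [pow_succ]
    linear_combination -h

/-- The skew product on polynomials. -/
noncomputable def jacS (a b : ℝ) (f g : ℝ[X]) : ℝ :=
  (1/2) * jacL (a+1) (b+1) (f * derivative g - derivative f * g)

lemma sip4J_eval (a b : ℝ) (f g : ℝ[X]) :
    sip4J a b (fun x => f.eval x) (fun x => g.eval x) = jacS a b f g := by
  unfold sip4J jacS jacL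
  rw [intervalIntegral.integral_of_le (by norm_num), integral_Ioc_eq_integral_Ioo]
  simp only [Polynomial.deriv, eval_sub, eval_mul]

lemma jacS_symm (a b : ℝ) (f g : ℝ[X]) : jacS a b f g = - jacS a b g f := by
  unfold jacS
  have : f * derivative g - derivative f * g = C (-1) * (g * derivative f - derivative g * f) := by
    simp; ring
  rw [this, jacL_C_mul]; ring

noncomputable def jacN (a b : ℝ) (f : ℝ[X]) : ℝ[X] :=
  (1 - X^2) * derivative f + C (1/2) * (jacE a b * f)

lemma jacS_eq (a b : ℝ) (ha : 0 < a) (hb : 0 < b) (f g : ℝ[X]) :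
    jacS a b f g = - jacL a b (g * jacN a b f) := by
  unfold jacS
  rw [jacL_shift a b ha hb]
  have h := jacL_ibp a b ha hb (f * g)
  have e : (1 - X^2) * (f * derivative g - derivative f * g) =
     ((1 - X^2) * derivative (f * g) + jacE a b * (f * g)) - C 2 * (g * jacN a b f) := by
    have hC : (C 2 : ℝ[X]) * C (1/2) = 1 := by rw [← C_mul]; norm_num
    have hC2 : (C 2 : ℝ[X]) = 2 := C_ofNat 2
    unfold jacN
    rw [derivative_mul]
    linear_combination jacE a b * f * g * hC - (1 - X^2) * derivative f * g * (-hC2)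
  rw [e, jacL_sub a b ha hb, h, jacL_C_mul]
  ring

lemma jacN_natDegree (a b : ℝ) (f : ℝ[X]) (k : ℕ) (hf : f.natDegree ≤ k) :
    (jacN a b f).natDegree ≤ k + 1 := by
  unfold jacN jacE
  refine natDegree_add_le_of_degree_le ?_ ?_
  · rcases Nat.eq_zero_or_pos k with rfl | hk
    · rw [eq_C_of_natDegree_le_zero hf]; simp
    · refine natDegree_mul_le.trans ?_
      have h1 : (1 - X^2 : ℝ[X]).natDegree ≤ 2 := by compute_degree
      have h2 := natDegree_derivative_le f
      omega
  · refine (natDegree_C_mul_le _ _).trans (natDegree_mul_le.trans ?_)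
    have h1 : (C (b + 1) * (1 - X) - C (a + 1) * (1 + X) : ℝ[X]).natDegree ≤ 1 := by compute_degree
    omega

lemma jacN_coeff (a b : ℝ) (f : ℝ[X]) (k : ℕ) (hf : f.natDegree ≤ k) :
    (jacN a b f).coeff (k+1) = - (k + (a + b + 2) / 2) * f.coeff k := by
  have h1 : f.coeff (k+1) = 0 := coeff_eq_zero_of_natDegree_lt (by omega)
  have h2 : f.coeff (k+1+1) = 0 := coeff_eq_zero_of_natDegree_lt (by omega)
  have e : jacN a b f = derivative f - X * (X * derivative f) +
      C ((b - a)/2) * f - C ((a + b + 2)/2) * (X * f) := by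
    have e1 : (C ((b - a)/2) : ℝ[X]) = C (1/2) * (C b - C a) := by
      rw [← C_sub, ← C_mul]; congr 1; ring
    have e2 : (C ((a + b + 2)/2) : ℝ[X]) = C (1/2) * (C a + C b + 2) := by
      rw [← C_add, ← C_ofNat, ← C_add, ← C_mul]; congr 1; ring
    unfold jacN jacE
    rw [e1, e2, C_add, C_add, C_1]
    ring
  have h3 : (X * derivative f).coeff k = k * f.coeff k := by
    cases k with
    | zero => simp
    | succ k => rw [coeff_X_mul, coeff_derivative]; push_cast; ring
  rw [e]
  simp only [coeff_sub, coeff_add, coeff_X_mul, coeff_C_mul, coeff_derivative, h1, h2, h3]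
  ring

noncomputable def jacK (a b : ℝ) (k : ℕ) : ℝ :=
  2 ^ k * (Nat.factorial k) * Real.Gamma (a + b + (k : ℝ) + 1) /
    Real.Gamma (a + b + 2 * (k : ℝ) + 1)

noncomputable def monPoly (a b : ℝ) (k : ℕ) : ℝ[X] := C (jacK a b k) * jacPoly a b k

lemma monPoly_eval (a b : ℝ) (k : ℕ) (x : ℝ) : (monPoly a b k).eval x = jacobiMonic a b k x := by
  simp only [monPoly, jacobiMonic, eval_mul, eval_C, jacPoly_eval, jacK]

lemma monPoly_natDegree (a b : ℝ) (k : ℕ) : (monPoly a b k).natDegree ≤ k :=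
  (natDegree_C_mul_le _ _).trans (jacPoly_natDegree a b k)

lemma monPoly_coeff (a b : ℝ) (ha : 0 < a) (hb : 0 < b) (k : ℕ) : (monPoly a b k).coeff k = 1 := by
  rw [monPoly, coeff_C_mul, jacPoly_coeff k a b ha hb, jacK]
  have g1 : Real.Gamma (a + b + k + 1) ≠ 0 := (Real.Gamma_pos_of_pos (by positivity)).ne'
  have g2 : Real.Gamma (a + b + 2 * k + 1) ≠ 0 := (Real.Gamma_pos_of_pos (by positivity)).ne'
  field_simp

/-- The squared norm of the monic Jacobi polynomial. -/
noncomputable def jacH (a b : ℝ) (k : ℕ) : ℝ :=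
  2 ^ (a + b + 2 * k + 1) * k.factorial * Real.Gamma (a + b + k + 1) * Real.Gamma (a + k + 1) *
    Real.Gamma (b + k + 1) / (Real.Gamma (a + b + 2 * k + 1) * Real.Gamma (a + b + 2 * k + 2))

lemma monPoly_orth (a b : ℝ) (ha : 0 < a) (hb : 0 < b) (k : ℕ) (Q : ℝ[X]) (hQ : Q.natDegree ≤ k) :
    jacL a b (monPoly a b k * Q) = Q.coeff k * jacH a b k := by
  rw [monPoly, mul_assoc, jacL_C_mul, jacL_orth k a b ha hb Q hQ, jacL_one _ _ (by positivity)
    (by positivity), jacK, jacH]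
  rw [show a + (k:ℝ) + (b + k) + 1 = a + b + 2 * k + 1 by ring,
    show a + (k:ℝ) + (b + k) + 2 = a + b + 2 * k + 2 by ring]
  have g1 : Real.Gamma (a + b + 2 * k + 1) ≠ 0 := (Real.Gamma_pos_of_pos (by positivity)).ne'
  have g2 : Real.Gamma (a + b + 2 * k + 2) ≠ 0 := (Real.Gamma_pos_of_pos (by positivity)).ne'
  rw [one_div, inv_pow]
  field_simp

lemma jacS_far (a b : ℝ) (ha : 0 < a) (hb : 0 < b) (j k : ℕ) (h : j + 1 < k) :
    jacS a b (monPoly a b j) (monPoly a b k) = 0 := by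
  have hd := jacN_natDegree a b _ j (monPoly_natDegree a b j)
  rw [jacS_eq a b ha hb, monPoly_orth a b ha hb k _ (by omega),
    coeff_eq_zero_of_natDegree_lt (by omega)]
  simp

noncomputable def jacG (a b : ℝ) (j : ℕ) : ℝ := (j + (a + b + 2) / 2) * jacH a b (j+1)

lemma jacS_near (a b : ℝ) (ha : 0 < a) (hb : 0 < b) (j : ℕ) :
    jacS a b (monPoly a b j) (monPoly a b (j+1)) = jacG a b j := by
  have hd := jacN_natDegree a b _ j (monPoly_natDegree a b j)
  rw [jacS_eq a b ha hb, monPoly_orth a b ha hb (j+1) _ hd,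
    jacN_coeff a b _ j (monPoly_natDegree a b j), monPoly_coeff a b ha hb, jacG]
  ring

lemma jacS_parity (a b : ℝ) (ha : 0 < a) (hb : 0 < b) (j k : ℕ) (h : j % 2 = k % 2) :
    jacS a b (monPoly a b j) (monPoly a b k) = 0 := by
  rcases lt_trichotomy j k with hjk | rfl | hjk
  · exact jacS_far a b ha hb j k (by omega)
  · have := jacS_symm a b (monPoly a b j) (monPoly a b j); linarith
  · rw [jacS_symm, jacS_far a b ha hb k j (by omega), neg_zero]

lemma jacS_even_odd (a b : ℝ) (ha : 0 < a) (hb : 0 < b) (i n : ℕ) :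
    jacS a b (monPoly a b (2 * i)) (monPoly a b (2 * n + 1)) =
      (if n = i then jacG a b (2 * n) else 0) - (if n + 1 = i then jacG a b (2 * n + 1) else 0) := by
  rcases lt_trichotomy i n with h | rfl | h
  · rw [jacS_far a b ha hb _ _ (by omega), if_neg (by omega), if_neg (by omega), sub_zero]
  · rw [jacS_near a b ha hb, if_pos rfl, if_neg (by omega), sub_zero]
  · rw [if_neg (by omega), jacS_symm]
    by_cases h' : n + 1 = i
    · subst h'
      rw [if_pos rfl, show 2 * (n + 1) = 2 * n + 1 + 1 by ring, jacS_near a b ha hb, zero_sub]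
    · rw [if_neg h', jacS_far a b ha hb _ _ (by omega)]; simp

lemma jacS_add_left (a b : ℝ) (ha : 0 < a) (hb : 0 < b) (f f' g : ℝ[X]) :
    jacS a b (f + f') g = jacS a b f g + jacS a b f' g := by
  unfold jacS
  rw [← mul_add, ← jacL_add _ _ (by positivity) (by positivity), derivative_add]
  congr 2; ring

lemma jacS_C_mul_left (a b : ℝ) (c : ℝ) (f g : ℝ[X]) :
    jacS a b (C c * f) g = c * jacS a b f g := by
  unfold jacS
  have e : C c * f * derivative g - derivative (C c * f) * g =
      C c * (f * derivative g - derivative f * g) := by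
    rw [derivative_C_mul]; ring
  rw [e, jacL_C_mul]; ring

lemma jacS_sum_left (a b : ℝ) (ha : 0 < a) (hb : 0 < b) (d : ℕ → ℝ) (f : ℕ → ℝ[X]) (g : ℝ[X])
    (n : ℕ) : jacS a b (∑ i ∈ range n, C (d i) * f i) g = ∑ i ∈ range n, d i * jacS a b (f i) g := by
  induction n with
  | zero => simp [jacS, jacL_zero]
  | succ n ih => rw [sum_range_succ, sum_range_succ, jacS_add_left a b ha hb, ih, jacS_C_mul_left]

noncomputable def jacD (a b : ℝ) (i : ℕ) : ℝ :=
      (Real.Gamma (a + b + 4 * (i : ℝ) + 2) /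
        ((Nat.factorial i) * 2 ^ (6 * i) * Real.Gamma (a / 2 + b / 2 + (i : ℝ) + 1) *
          Real.Gamma (a / 2 + (i : ℝ) + 1) * Real.Gamma (b / 2 + (i : ℝ) + 1)))

lemma jacD_ne (a b : ℝ) (ha : 0 < a) (hb : 0 < b) (i : ℕ) : jacD a b i ≠ 0 := by
  unfold jacD
  have g1 := Real.Gamma_pos_of_pos (show 0 < a + b + 4 * (i : ℝ) + 2 by positivity)
  have g2 := Real.Gamma_pos_of_pos (show 0 < a / 2 + b / 2 + (i : ℝ) + 1 by positivity)
  have g3 := Real.Gamma_pos_of_pos (show 0 < a / 2 + (i : ℝ) + 1 by positivity)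
  have g4 := Real.Gamma_pos_of_pos (show 0 < b / 2 + (i : ℝ) + 1 by positivity)
  positivity

noncomputable def qEven (a b : ℝ) (m : ℕ) : ℝ[X] :=
  C (jacD a b m)⁻¹ * ∑ i ∈ range (m + 1), C (jacD a b i) * monPoly a b (2 * i)

lemma qJSE_even (a b : ℝ) (m : ℕ) :
    qJSE a b (2 * m) = fun x => (qEven a b m).eval x := by
  ext x
  simp only [qJSE, qEven, eval_mul, eval_C, eval_finsetSum, monPoly_eval]
  rw [if_neg (by omega), Nat.mul_div_cancel_left m (by norm_num)]
  congr 1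
  unfold jacD
  rw [inv_div]
  push_cast
  rw [show a + b + 2 * (2 * (m:ℝ)) + 2 = a + b + 4 * m + 2 by ring,
    show 3 * (2 * m) = 6 * m by ring]
  ring

lemma qJSE_odd (a b : ℝ) (m : ℕ) :
    qJSE a b (2 * m + 1) = fun x => (monPoly a b (2 * m + 1)).eval x := by
  ext x
  simp only [qJSE, monPoly_eval]
  rw [if_pos (by omega)]

lemma Gamma_step (x : ℝ) (hx : 0 < x) (y : ℝ) (h : y = x + 1) :
    Real.Gamma y = x * Real.Gamma x := by
  rw [h, Real.Gamma_add_one hx.ne']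

lemma jacDG (a b : ℝ) (ha : 0 < a) (hb : 0 < b) (n : ℕ) :
    jacD a b n * jacG a b (2 * n) = jacD a b (n+1) * jacG a b (2 * n + 1) := by
  unfold jacD jacG jacH
  push_cast
  rw [Nat.factorial_succ n, Nat.factorial_succ (2 * n + 1)]
  have n0 : (0:ℝ) ≤ n := by positivity
  -- normalise the Gamma factors
  rw [Gamma_step (a + b + 4 * n + 5) (by positivity) (a + b + 4 * ((n:ℝ) + 1) + 2) (by ring),
    Gamma_step (a + b + 4 * n + 4) (by positivity) (a + b + 4 * (n:ℝ) + 5) (by ring),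
    Gamma_step (a / 2 + b / 2 + n + 1) (by positivity) (a / 2 + b / 2 + ((n:ℝ) + 1) + 1) (by ring),
    Gamma_step (a / 2 + n + 1) (by positivity) (a / 2 + ((n:ℝ) + 1) + 1) (by ring),
    Gamma_step (b / 2 + n + 1) (by positivity) (b / 2 + ((n:ℝ) + 1) + 1) (by ring),
    Gamma_step (a + b + 2 * n + 2) (by positivity) (a + b + (2 * (n:ℝ) + 1 + 1) + 1) (by ring),
    Gamma_step (a + 2 * n + 2) (by positivity) (a + (2 * (n:ℝ) + 1 + 1) + 1) (by ring),
    Gamma_step (b + 2 * n + 2) (by positivity) (b + (2 * (n:ℝ) + 1 + 1) + 1) (by ring),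
    Gamma_step (a + b + 4 * n + 5) (by positivity) (a + b + 2 * (2 * (n:ℝ) + 1 + 1) + 2) (by ring),
    show a + b + 2 * (2 * (n:ℝ) + 1 + 1) + 1 = a + b + 4 * n + 5 by ring,
    Gamma_step (a + b + 4 * n + 4) (by positivity) (a + b + 4 * (n:ℝ) + 5) (by ring),
    show a + b + 2 * (2 * (n:ℝ) + 1) + 2 = a + b + 4 * n + 4 by ring,
    Gamma_step (a + b + 4 * n + 3) (by positivity) (a + b + 4 * (n:ℝ) + 4) (by ring),
    show a + b + 2 * (2 * (n:ℝ) + 1) + 1 = a + b + 4 * n + 3 by ring,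
    Gamma_step (a + b + 4 * n + 2) (by positivity) (a + b + 4 * (n:ℝ) + 3) (by ring),
    show a + b + (2 * (n:ℝ) + 1) + 1 = a + b + 2 * n + 2 by ring,
    show a + (2 * (n:ℝ) + 1) + 1 = a + 2 * n + 2 by ring,
    show b + (2 * (n:ℝ) + 1) + 1 = b + 2 * n + 2 by ring,
    show (2:ℝ) ^ (a + b + 4 * (n:ℝ) + 5) = 2 ^ (a + b + 4 * n + 3) * 4 by
      rw [show (4:ℝ) = 2 ^ (2:ℝ) by norm_num, ← Real.rpow_add (by norm_num)]; ring_nf,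
    show 6 * (n + 1) = 6 * n + 6 by ring, pow_add]
  have g1 := Real.Gamma_pos_of_pos (show 0 < a + b + 4 * (n : ℝ) + 2 by positivity)
  have g2 := Real.Gamma_pos_of_pos (show 0 < a / 2 + b / 2 + (n : ℝ) + 1 by positivity)
  have g3 := Real.Gamma_pos_of_pos (show 0 < a / 2 + (n : ℝ) + 1 by positivity)
  have g4 := Real.Gamma_pos_of_pos (show 0 < b / 2 + (n : ℝ) + 1 by positivity)
  have g5 := Real.Gamma_pos_of_pos (show 0 < a + b + 2 * (n : ℝ) + 2 by positivity)
  have g6 := Real.Gamma_pos_of_pos (show 0 < a + 2 * (n : ℝ) + 2 by positivity)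
  have g7 := Real.Gamma_pos_of_pos (show 0 < b + 2 * (n : ℝ) + 2 by positivity)
  have r1 : (0:ℝ) < 2 ^ (a + b + 4 * (n:ℝ) + 3) := by positivity
  generalize Real.Gamma (a + b + 4 * (n : ℝ) + 2) = G1 at *
  generalize Real.Gamma (a / 2 + b / 2 + (n : ℝ) + 1) = G2 at *
  generalize Real.Gamma (a / 2 + (n : ℝ) + 1) = G3 at *
  generalize Real.Gamma (b / 2 + (n : ℝ) + 1) = G4 at *
  generalize Real.Gamma (a + b + 2 * (n : ℝ) + 2) = G5 at *
  generalize Real.Gamma (a + 2 * (n : ℝ) + 2) = G6 at *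
  generalize Real.Gamma (b + 2 * (n : ℝ) + 2) = G7 at *
  generalize (2:ℝ) ^ (a + b + 4 * (n:ℝ) + 3) = R at *
  have f1 : (0:ℝ) < n.factorial := by positivity
  have f2 : (0:ℝ) < (2 * n + 1).factorial := by positivity
  have t1 : (0:ℝ) < 2 ^ (6 * n) := by positivity
  push_cast
  generalize (n.factorial : ℝ) = F1 at *
  generalize ((2 * n + 1).factorial : ℝ) = F2 at *
  generalize (2:ℝ) ^ (6 * n) = T at *
  generalize (n:ℝ) = N at *
  have p1 : a + b + 4 * N + 2 ≠ 0 := by positivity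
  have p2 : a + b + 4 * N + 3 ≠ 0 := by positivity
  have p3 : a + b + 4 * N + 4 ≠ 0 := by positivity
  have p4 : a + b + 4 * N + 5 ≠ 0 := by positivity
  have p5 : a / 2 + b / 2 + N + 1 ≠ 0 := by positivity
  have p6 : a / 2 + N + 1 ≠ 0 := by positivity
  have p7 : b / 2 + N + 1 ≠ 0 := by positivity
  have p8 : N + 1 ≠ 0 := by positivity
  rw [show a + b + 2 * N + 2 = 2 * (a / 2 + b / 2 + N + 1) by ring,
    show a + 2 * N + 2 = 2 * (a / 2 + N + 1) by ring,
    show b + 2 * N + 2 = 2 * (b / 2 + N + 1) by ring,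
    show 2 * N + (a + b + 2) / 2 = (a + b + 4 * N + 2) / 2 by ring,
    show 2 * N + 1 + (a + b + 2) / 2 = (a + b + 4 * N + 4) / 2 by ring]
  generalize a / 2 + b / 2 + N + 1 = P5 at *
  generalize a / 2 + N + 1 = P6 at *
  generalize b / 2 + N + 1 = P7 at *
  generalize a + b + 4 * N + 2 = P1 at *
  generalize a + b + 4 * N + 3 = P2 at *
  generalize a + b + 4 * N + 4 = P3 at *
  generalize a + b + 4 * N + 5 = P4 at *
  field_simp
  ring

lemma jacG_even (a b : ℝ) (ha : 0 < a) (hb : 0 < b) (m : ℕ) : jacG a b (2 * m) =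
    2 ^ (a + b + 4 * (m : ℝ) + 2) * Real.Gamma (2 * (m : ℝ) + 2) *
          Real.Gamma (a + 2 * (m : ℝ) + 2) * Real.Gamma (b + 2 * (m : ℝ) + 2) *
          Real.Gamma (a + b + 2 * (m : ℝ) + 2) /
          (Real.Gamma (a + b + 4 * (m : ℝ) + 2) * Real.Gamma (a + b + 4 * (m : ℝ) + 4)) := by
  unfold jacG jacH
  have e : Real.Gamma (2 * (m : ℝ) + 2) = (2 * m + 1).factorial := by
    rw [← Real.Gamma_nat_eq_factorial]; push_cast; ring_nf
  push_cast
  rw [e, show a + b + 2 * (2 * (m:ℝ) + 1) + 2 = a + b + 4 * m + 4 by ring,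
    Gamma_step (a + b + 4 * m + 2) (by positivity) (a + b + 2 * (2 * (m:ℝ) + 1) + 1) (by ring),
    show a + b + (2 * (m:ℝ) + 1) + 1 = a + b + 2 * m + 2 by ring,
    show a + (2 * (m:ℝ) + 1) + 1 = a + 2 * m + 2 by ring,
    show b + (2 * (m:ℝ) + 1) + 1 = b + 2 * m + 2 by ring,
    show a + b + 2 * (2 * (m:ℝ) + 1) + 1 = a + b + 4 * m + 2 + 1 by ring,
    Real.rpow_add_one (by norm_num)]
  have g1 := Real.Gamma_pos_of_pos (show 0 < a + b + 4 * (m : ℝ) + 2 by positivity)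
  have g2 := Real.Gamma_pos_of_pos (show 0 < a + b + 4 * (m : ℝ) + 4 by positivity)
  have p1 : a + b + 4 * (m:ℝ) + 2 ≠ 0 := by positivity
  rw [show 2 * (m:ℝ) + (a + b + 2) / 2 = (a + b + 4 * m + 2) / 2 by ring]
  field_simp

lemma qEven_odd (a b : ℝ) (ha : 0 < a) (hb : 0 < b) (m n : ℕ) :
    jacS a b (qEven a b m) (monPoly a b (2 * n + 1)) = if m = n then jacG a b (2 * n) else 0 := by
  have hm := jacD_ne a b ha hb m
  rw [qEven, jacS_C_mul_left, jacS_sum_left a b ha hb]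
  simp only [jacS_even_odd a b ha hb, mul_sub, mul_ite, mul_zero, sum_sub_distrib, sum_ite_eq,
    mem_range]
  rcases lt_trichotomy m n with h | rfl | h
  · simp [show ¬ n < m + 1 by omega, show ¬ n < m by omega, show m ≠ n by omega]
  · simp; field_simp
  · simp [show n < m + 1 by omega, h, h.ne', jacDG a b ha hb n]

lemma qEven_even (a b : ℝ) (ha : 0 < a) (hb : 0 < b) (m n : ℕ) :
    jacS a b (qEven a b m) (qEven a b n) = 0 := by
  have h : ∀ i, jacS a b (monPoly a b (2 * i)) (qEven a b n) = 0 := by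
    intro i
    rw [jacS_symm, qEven, jacS_C_mul_left, jacS_sum_left a b ha hb, sum_eq_zero]
    · simp
    · intro j _
      rw [jacS_parity a b ha hb _ _ (by omega), mul_zero]
  rw [qEven, jacS_C_mul_left, jacS_sum_left a b ha hb, sum_eq_zero]
  · simp
  · intro j _
    rw [h, mul_zero]

/-- The family `{q̃_j}` is skew orthogonal for the β = 4 Jacobi skew inner product. -/
theorem jacobi_skew_orthogonal_beta4 (a b : ℝ) (ha : 0 < a) (hb : 0 < b) (m n : ℕ) :
    sip4J a b (qJSE a b (2 * m)) (qJSE a b (2 * n)) = 0 ∧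
    sip4J a b (qJSE a b (2 * m + 1)) (qJSE a b (2 * n + 1)) = 0 ∧
    (m ≠ n → sip4J a b (qJSE a b (2 * m)) (qJSE a b (2 * n + 1)) = 0) ∧
    sip4J a b (qJSE a b (2 * m)) (qJSE a b (2 * m + 1))
      = 2 ^ (a + b + 4 * (m : ℝ) + 2) * Real.Gamma (2 * (m : ℝ) + 2) *
          Real.Gamma (a + 2 * (m : ℝ) + 2) * Real.Gamma (b + 2 * (m : ℝ) + 2) *
          Real.Gamma (a + b + 2 * (m : ℝ) + 2) /
          (Real.Gamma (a + b + 4 * (m : ℝ) + 2) * Real.Gamma (a + b + 4 * (m : ℝ) + 4)) := by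
  rw [qJSE_even, qJSE_even, qJSE_odd, qJSE_odd, sip4J_eval, sip4J_eval, sip4J_eval, sip4J_eval]
  refine ⟨qEven_even a b ha hb m n, jacS_parity a b ha hb _ _ (by omega), fun h => ?_, ?_⟩
  · rw [qEven_odd a b ha hb, if_neg h]
  · rw [qEven_odd a b ha hb, if_pos rfl, jacG_even a b ha hb]
end

section
/- Let N ≥ 1 be a natural number. Define q_{2m+1}(x) = p_{2m+1}(x), q_{2m}(x) = m! Σ_{n=0}^{m} p_{2n}(x)/n!, and r_m = 2^{−2m−1} √π (2m+1)!, where p_k are the monic Hermite polynomials. Define S₄(x,y) = Σ_{m=0}^{N−1} (e^{−x²/2}/(2r_m))·(q_{2m}(x)·(d/dy)[e^{−y²/2} q_{2m+1}(y)] − q_{2m+1}(x)·(d/dy)[e^{−y²/2} q_{2m}(y)]). Then for all real x, y: S₄(x,y) = (1/2)·e^{−(x²+y²)/2} Σ_{l=0}^{2N−1} H_l(x)H_l(y)/(√π·2^l·l!) − (1/2)·(2^{2N−1}/(√π·(2N−1)!))·e^{−y²/2}·p_{2N}(y)·∫_x^{∞} e^{−t²/2}·p_{2N−1}(t) dt.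 -/
open MeasureTheory Finset

/-- The physicists' Hermite polynomials. -/
noncomputable def hermiteH : ℕ → ℝ → ℝ
  | 0, _ => 1
  | 1, x => 2 * x
  | (n + 2), x => 2 * x * hermiteH (n + 1) x - 2 * (n + 1) * hermiteH n x

/-- The monic Hermite polynomials `p_k = 2^{−k} H_k`. -/
noncomputable def hermiteP (k : ℕ) (x : ℝ) : ℝ := hermiteH k x / 2 ^ k

/-- `q_{2m+1} = p_{2m+1}`, `q_{2m} = m! Σ_{n=0}^m p_{2n}/n!`. -/
noncomputable def qGSE (j : ℕ) (x : ℝ) : ℝ :=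
  if j % 2 = 1 then hermiteP j x
  else (Nat.factorial (j / 2)) *
    ∑ n ∈ range (j / 2 + 1), hermiteP (2 * n) x / (Nat.factorial n)

/-- The normalizations `r_m = 2^{−2m−1} √π (2m+1)!`. -/
noncomputable def rGSE (m : ℕ) : ℝ :=
  Real.sqrt Real.pi * (Nat.factorial (2 * m + 1)) / 2 ^ (2 * m + 1)

/-- The GSE kernel `S₄(x,y)`. -/
noncomputable def S4GSE (N : ℕ) (x y : ℝ) : ℝ :=
  ∑ m ∈ range N, (Real.exp (-x ^ 2 / 2) / (2 * rGSE m)) *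
    (qGSE (2 * m) x * deriv (fun t => Real.exp (-t ^ 2 / 2) * qGSE (2 * m + 1) t) y -
     qGSE (2 * m + 1) x * deriv (fun t => Real.exp (-t ^ 2 / 2) * qGSE (2 * m) t) y)

lemma hermiteP_rec (k : ℕ) (x : ℝ) :
    hermiteP (k + 2) x = x * hermiteP (k + 1) x - ((k : ℝ) + 1) / 2 * hermiteP k x := by
  simp only [hermiteP, hermiteH, pow_succ]
  field_simp

lemma hermiteP_zero (x : ℝ) : hermiteP 0 x = 1 := by simp [hermiteP, hermiteH]

lemma hermiteP_one (x : ℝ) : hermiteP 1 x = x := by simp [hermiteP, hermiteH]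

lemma hermiteP_deriv (k : ℕ) (x : ℝ) :
    HasDerivAt (hermiteP (k + 1)) (((k : ℝ) + 1) * hermiteP k x) x ∧
    HasDerivAt (hermiteP (k + 2)) (((k : ℝ) + 2) * hermiteP (k + 1) x) x := by
  induction k with
  | zero =>
    have h1 : hermiteP 1 = fun x => x := funext hermiteP_one
    have h2 : hermiteP 2 = fun x => x * x - 1 / 2 := by
      funext x
      rw [hermiteP_rec 0, hermiteP_one, hermiteP_zero]; norm_num
    constructor
    · rw [zero_add, h1, hermiteP_zero]
      exact (hasDerivAt_id x).congr_deriv (by simp)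
    · rw [zero_add, h2, hermiteP_one]
      have := ((hasDerivAt_id x).mul (hasDerivAt_id x)).sub_const (1 / 2 : ℝ)
      refine HasDerivAt.congr_deriv this ?_
      simp; ring
  | succ k ih =>
    refine ⟨ih.2.congr_deriv (by push_cast; ring), ?_⟩
    have h3 : hermiteP (k + 1 + 2) =
        fun x => x * hermiteP (k + 2) x - ((k : ℝ) + 1 + 1) / 2 * hermiteP (k + 1) x := by
      funext x
      rw [hermiteP_rec (k + 1)]; push_cast; ring
    rw [h3]
    have := ((hasDerivAt_id x).mul ih.2).sub (ih.1.const_mul (((k : ℝ) + 1 + 1) / 2))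
    refine HasDerivAt.congr_deriv this ?_
    have := hermiteP_rec k x
    simp only [id, show k + 1 + 1 = k + 2 from rfl]
    push_cast
    linear_combination (-((k : ℝ) + 2)) * this

/-- weighted functions -/
noncomputable def phiGSE (k : ℕ) (x : ℝ) : ℝ := Real.exp (-x ^ 2 / 2) * hermiteP k x

lemma exp_deriv (x : ℝ) :
    HasDerivAt (fun t : ℝ => Real.exp (-t ^ 2 / 2)) (-x * Real.exp (-x ^ 2 / 2)) x := by
  have h : HasDerivAt (fun t : ℝ => -t ^ 2 / 2) (-x) x := by
    have := ((hasDerivAt_pow 2 x).neg).div_const 2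
    refine HasDerivAt.congr_deriv this ?_
    simp
    ring
  refine HasDerivAt.congr_deriv h.exp ?_
  ring

lemma phi_deriv_zero (x : ℝ) : HasDerivAt (phiGSE 0) (-phiGSE 1 x) x := by
  have h : phiGSE 0 = fun t : ℝ => Real.exp (-t ^ 2 / 2) := by
    funext t; simp [phiGSE, hermiteP_zero]
  rw [h]
  refine (exp_deriv x).congr_deriv ?_
  simp [phiGSE, hermiteP_one]; ring

lemma phi_deriv (k : ℕ) (x : ℝ) :
    HasDerivAt (phiGSE (k + 1)) (((k : ℝ) + 1) / 2 * phiGSE k x - phiGSE (k + 2) x) x := by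
  have := (exp_deriv x).mul (hermiteP_deriv k x).1
  refine HasDerivAt.congr_deriv this ?_
  simp only [phiGSE, hermiteP_rec k]
  ring

lemma pow_phi_integrable (k : ℕ) : ∀ j : ℕ,
    Integrable (fun t : ℝ => t ^ j * phiGSE k t) ∧
    Integrable (fun t : ℝ => t ^ j * phiGSE (k + 1) t) := by
  have base : ∀ j : ℕ, Integrable (fun t : ℝ => t ^ j * Real.exp (-t ^ 2 / 2)) := by
    intro j
    have := integrable_rpow_mul_exp_neg_mul_sq (b := 1 / 2) (by norm_num) (s := (j : ℝ))
      (by have : (0 : ℝ) ≤ j := Nat.cast_nonneg j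
          linarith)
    refine this.congr (Filter.Eventually.of_forall fun t => ?_)
    simp only [Real.rpow_natCast]
    congr 2; ring
  induction k with
  | zero =>
    intro j
    refine ⟨by simpa [phiGSE, hermiteP_zero] using base j, ?_⟩
    refine (base (j + 1)).congr (Filter.Eventually.of_forall fun t => ?_)
    simp only [phiGSE, zero_add, hermiteP_one]
    ring
  | succ k ih =>
    intro j
    refine ⟨(ih j).2, ?_⟩
    refine ((ih (j + 1)).2.sub ((ih j).1.const_mul (((k : ℝ) + 1) / 2))).congr
      (Filter.Eventually.of_forall fun t => ?_)
    simp only [phiGSE, hermiteP_rec k, Pi.sub_apply]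
    ring

lemma phi_integrable (k : ℕ) : Integrable (phiGSE k) := by
  simpa using (pow_phi_integrable k 0).1

/-- weighted even skew-orthogonal functions, recursively -/
noncomputable def QGSE : ℕ → ℝ → ℝ
  | 0, x => phiGSE 0 x
  | (m + 1), x => ((m : ℝ) + 1) * QGSE m x + phiGSE (2 * m + 2) x

lemma Q_eq (m : ℕ) (x : ℝ) : Real.exp (-x ^ 2 / 2) * qGSE (2 * m) x = QGSE m x := by
  have h : ∀ m, qGSE (2 * m) x = (Nat.factorial m) *
      ∑ n ∈ range (m + 1), hermiteP (2 * n) x / (Nat.factorial n) := by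
    intro m
    simp [qGSE]
  rw [h]
  induction m with
  | zero => simp [QGSE, phiGSE]
  | succ m ih =>
    rw [QGSE, ← ih, sum_range_succ, Nat.factorial_succ, phiGSE]
    have := Nat.factorial_ne_zero m
    push_cast
    rw [show 2 * (m + 1) = 2 * m + 2 by ring]
    field_simp

lemma Q_deriv (m : ℕ) (x : ℝ) : HasDerivAt (QGSE m) (-phiGSE (2 * m + 1) x) x := by
  induction m with
  | zero =>
    have : QGSE 0 = phiGSE 0 := by funext t; rfl
    rw [this]; exact phi_deriv_zero x
  | succ m ih =>
    have := (ih.const_mul ((m : ℝ) + 1)).add (phi_deriv (2 * m + 1) x)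
    refine HasDerivAt.congr_deriv this ?_
    rw [show 2 * (m + 1) + 1 = 2 * m + 1 + 2 by ring]
    push_cast
    ring

lemma Q_integrable (m : ℕ) : Integrable (QGSE m) := by
  induction m with
  | zero => exact phi_integrable 0
  | succ m ih => exact (ih.const_mul ((m : ℝ) + 1)).add (phi_integrable (2 * m + 2))

lemma phi_integral (m : ℕ) (x : ℝ) :
    ∫ t in Set.Ioi x, phiGSE (2 * m + 1) t = QGSE m x := by
  have hd : ∀ t, HasDerivAt (fun t => -QGSE m t) (phiGSE (2 * m + 1) t) t := by
    intro t
    exact (Q_deriv m t).neg.congr_deriv (by simp)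
  have ht := tendsto_zero_of_hasDerivAt_of_integrableOn_Ioi (a := x) (fun t _ => hd t)
    (phi_integrable (2 * m + 1)).integrableOn (Q_integrable m).neg.integrableOn
  have := integral_Ioi_of_hasDerivAt_of_tendsto' (a := x) (fun t _ => hd t)
    (phi_integrable (2 * m + 1)).integrableOn ht
  rw [this]; simp

lemma HH (l : ℕ) (x y : ℝ) :
    Real.exp (-(x ^ 2 + y ^ 2) / 2) * (hermiteH l x * hermiteH l y /
      (Real.sqrt Real.pi * 2 ^ l * (Nat.factorial l))) =
    phiGSE l x * phiGSE l y * 2 ^ l / (Real.sqrt Real.pi * (Nat.factorial l)) := by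
  have : Real.sqrt Real.pi ≠ 0 := (Real.sqrt_pos.2 Real.pi_pos).ne'
  have := Nat.factorial_ne_zero l
  rw [show -(x ^ 2 + y ^ 2) / 2 = -x ^ 2 / 2 + -y ^ 2 / 2 by ring, Real.exp_add]
  simp only [phiGSE, hermiteP]
  field_simp

lemma S4_eq (N : ℕ) (x y : ℝ) : S4GSE N x y = ∑ m ∈ range N, 1 / (2 * rGSE m) *
    (QGSE m x * ((2 * (m : ℝ) + 1) / 2 * phiGSE (2 * m) y - phiGSE (2 * m + 2) y) +
      phiGSE (2 * m + 1) x * phiGSE (2 * m + 1) y) := by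
  refine sum_congr rfl fun m _ => ?_
  have ho : ∀ t, qGSE (2 * m + 1) t = hermiteP (2 * m + 1) t := by
    intro t
    simp [qGSE, Nat.add_mod]
  have h1 : (fun t => Real.exp (-t ^ 2 / 2) * qGSE (2 * m + 1) t) = phiGSE (2 * m + 1) := by
    funext t; rw [ho, phiGSE]
  have h2 : (fun t => Real.exp (-t ^ 2 / 2) * qGSE (2 * m) t) = QGSE m := by
    funext t; rw [Q_eq]
  rw [h1, h2, (phi_deriv (2 * m) y).deriv, (Q_deriv m y).deriv, ← Q_eq m x, ho,
    phiGSE.eq_1 (2 * m + 1) x]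
  push_cast
  ring

lemma main_sum (M : ℕ) (x y : ℝ) : S4GSE (M + 1) x y =
    (1 / 2) * ∑ l ∈ range (2 * M + 2),
      phiGSE l x * phiGSE l y * 2 ^ l / (Real.sqrt Real.pi * (Nat.factorial l))
    - 1 / (2 * rGSE M) * phiGSE (2 * M + 2) y * QGSE M x := by
  have hp : Real.sqrt Real.pi ≠ 0 := (Real.sqrt_pos.2 Real.pi_pos).ne'
  rw [S4_eq]
  induction M with
  | zero =>
    simp [sum_range_succ, QGSE, rGSE]
    field_simp
    ring
  | succ M ih =>
    rw [sum_range_succ, ih, show 2 * (M + 1) + 2 = 2 * M + 2 + 1 + 1 by ring,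
      sum_range_succ _ (2 * M + 2 + 1), sum_range_succ _ (2 * M + 2), QGSE]
    simp only [rGSE, show 2 * (M + 1) = 2 * M + 1 + 1 by ring, Nat.factorial_succ (2 * M + 1 + 1),
      show 2 * M + 2 = 2 * M + 1 + 1 by ring, Nat.factorial_succ (2 * M + 1), pow_succ]
    have := Nat.factorial_ne_zero (2 * M + 1)
    push_cast
    have h2 : 2 * (M : ℝ) + 1 + 1 ≠ 0 := by positivity
    have h3 : 2 * (M : ℝ) + 1 + 1 + 1 ≠ 0 := by positivity
    have h4 : (M : ℝ) + 1 ≠ 0 := by positivity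
    field_simp
    ring

/-- Closed-form summation of the GSE kernel `S₄(x,y)`. -/
theorem gse_kernel_summation (N : ℕ) (hN : 1 ≤ N) (x y : ℝ) :
    S4GSE N x y
      = (1 / 2) * Real.exp (-(x ^ 2 + y ^ 2) / 2) *
          ∑ l ∈ range (2 * N),
            hermiteH l x * hermiteH l y / (Real.sqrt Real.pi * 2 ^ l * (Nat.factorial l))
        - (1 / 2) * (2 ^ (2 * N - 1) / (Real.sqrt Real.pi * (Nat.factorial (2 * N - 1)))) *
            Real.exp (-y ^ 2 / 2) * hermiteP (2 * N) y *
            ∫ t in Set.Ioi x, Real.exp (-t ^ 2 / 2) * hermiteP (2 * N - 1) t := by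
  obtain ⟨M, rfl⟩ : ∃ M, N = M + 1 := ⟨N - 1, by omega⟩
  have hI := phi_integral M x
  simp only [phiGSE] at hI
  rw [main_sum, show 2 * (M + 1) - 1 = 2 * M + 1 by omega, hI,
    mul_assoc (1 / 2 : ℝ) (Real.exp _), mul_sum (a := Real.exp _)]
  simp only [HH, rGSE, show 2 * (M + 1) = 2 * M + 2 by ring, phiGSE.eq_1 (2 * M + 2) y]
  have hp : Real.sqrt Real.pi ≠ 0 := (Real.sqrt_pos.2 Real.pi_pos).ne'
  have := Nat.factorial_ne_zero (2 * M + 1)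
  field_simp
end
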